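/- Let C be an arbitrary set of corner minors of M, and let U = (a_{ij}) and V' = (b_{ij}) be families of nonnegative integers indexed by the variables in V(C). Suppose that (1) for every W ∈ 𝒲 with W ≠ ∅ one has Σ_{x_{ij} ∈ W} a_{ij} ≥ 2 and Σ_{x_{ij} ∈ W} b_{ij} ≥ 2, and (2) U and V' have the same row sums and the same column sums, and there is a cycle σ in G(C) such that every nonzero entry of U and of V' occurs at a position x_{ij} = H_a ∩ V_b with h_a and v_b vertices of σ. Then the binomial ∏_{x_{ij} ∈ V(C)} x_{ij}^{a_{ij}} − ∏_{x_{ij} ∈ V(C)} x_{ij}^{b_{ij}} belongs to I(C); equivalently, the contingency tables U and V' are connected by the moves corresponding to the minors of C. -/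

import Mathlib

open MvPolynomial

/-- A 2-minor `[a₁,a₂|b₁,b₂]` (with `a₁ < a₂`, `b₁ < b₂`) of the `m × n` matrix
of indeterminates `M = (x_{ij})`. -/
structure Minor2 (m n : ℕ) where
  a1 : Fin m
  a2 : Fin m
  b1 : Fin n
  b2 : Fin n
  ha : a1 < a2
  hb : b1 < b2

namespace Minor2

variable {m n : ℕ}

/-- The vertex set of a 2-minor. -/
def vertexSet (δ : Minor2 m n) : Set (Fin m × Fin n) :=
  {(δ.a1, δ.b1), (δ.a1, δ.b2), (δ.a2, δ.b1), (δ.a2, δ.b2)}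

/-- `{p,q}` is one of the two vertical edges of the minor `δ`. -/
def VertEdge (δ : Minor2 m n) (p q : Fin m × Fin n) : Prop :=
  ({p, q} : Set (Fin m × Fin n)) = {(δ.a1, δ.b1), (δ.a2, δ.b1)} ∨
  ({p, q} : Set (Fin m × Fin n)) = {(δ.a1, δ.b2), (δ.a2, δ.b2)}

/-- `{p,q}` is one of the two horizontal edges of the minor `δ`. -/
def HorizEdge (δ : Minor2 m n) (p q : Fin m × Fin n) : Prop :=
  ({p, q} : Set (Fin m × Fin n)) = {(δ.a1, δ.b1), (δ.a1, δ.b2)} ∨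
  ({p, q} : Set (Fin m × Fin n)) = {(δ.a2, δ.b1), (δ.a2, δ.b2)}

/-- `{p,q}` is an edge (vertical or horizontal) of the minor `δ`. -/
def IsEdge (δ : Minor2 m n) (p q : Fin m × Fin n) : Prop :=
  δ.VertEdge p q ∨ δ.HorizEdge p q

/-- The binomial `f_δ = x_{a₁b₁}x_{a₂b₂} − x_{a₁b₂}x_{a₂b₁}` of the 2-minor `δ`. -/
noncomputable def binom (K : Type*) [Field K] (δ : Minor2 m n) : MvPolynomial (Fin m × Fin n) K :=
  X (δ.a1, δ.b1) * X (δ.a2, δ.b2) - X (δ.a1, δ.b2) * X (δ.a2, δ.b1)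

end Minor2

/-- The vertex set `V(C)` of a collection `C` of 2-minors. -/
def vertexSetOf {m n : ℕ} (C : Set (Minor2 m n)) : Set (Fin m × Fin n) :=
  ⋃ δ ∈ C, δ.vertexSet

/-- The binomial ideal `I(C)` generated by the binomials of the minors in `C`. -/
noncomputable def minorIdeal (K : Type*) [Field K] {m n : ℕ} (C : Set (Minor2 m n)) :
    Ideal (MvPolynomial (Fin m × Fin n) K) :=
  Ideal.span {f | ∃ δ ∈ C, f = Minor2.binom K δ}

/-- Two positions are joined by a vertical edge of some minor of `C`. -/
def vertAdj {m n : ℕ} (C : Set (Minor2 m n)) (p q : Fin m × Fin n) : Prop :=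
  ∃ δ ∈ C, δ.VertEdge p q

/-- Two positions are joined by a horizontal edge of some minor of `C`. -/
def horizAdj {m n : ℕ} (C : Set (Minor2 m n)) (p q : Fin m × Fin n) : Prop :=
  ∃ δ ∈ C, δ.HorizEdge p q

/-- The maximal vertical interval of `C` containing a position, encoded as the class of the
position under connectivity by vertical edges of minors of `C`. -/
def vClass {m n : ℕ} (C : Set (Minor2 m n)) (p : Fin m × Fin n) : Quot (vertAdj C) :=
  Quot.mk _ p

/-- The maximal horizontal interval of `C` containing a position. -/
def hClass {m n : ℕ} (C : Set (Minor2 m n)) (p : Fin m × Fin n) : Quot (horizAdj C) :=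
  Quot.mk _ p

/-- The monomial map `φ` with `φ(x_{ab}) = h_i v_j`, where `H_i` and `V_j` are the maximal
horizontal and vertical intervals of `C` containing `x_{ab}` (variables not appearing in any
minor of `C` are sent to products of fresh variables, so that the kernel of `φ` is the
extension to `S` of the toric ideal `J_C ⊆ S_C`). -/
noncomputable def phiC (K : Type*) [Field K] {m n : ℕ} (C : Set (Minor2 m n)) :
    MvPolynomial (Fin m × Fin n) K →ₐ[K]
      MvPolynomial (Quot (horizAdj C) ⊕ Quot (vertAdj C)) K :=
  aeval fun p => X (Sum.inl (hClass C p)) * X (Sum.inr (vClass C p))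

/-- The toric ideal `J_C = ker φ`. -/
noncomputable def toricIdeal (K : Type*) [Field K] {m n : ℕ} (C : Set (Minor2 m n)) :
    Ideal (MvPolynomial (Fin m × Fin n) K) :=
  RingHom.ker (phiC K C)

/-- A subset `W ⊆ V(C)` is admissible if for every `δ ∈ C` either `W ∩ V(δ) = ∅`
or `W` contains an edge of `δ`. -/
def Admissible {m n : ℕ} (C : Set (Minor2 m n)) (W : Set (Fin m × Fin n)) : Prop :=
  W ⊆ vertexSetOf C ∧
    ∀ δ ∈ C, W ∩ δ.vertexSet = ∅ ∨ ∃ p q, p ∈ W ∧ q ∈ W ∧ δ.IsEdge p q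

/-- `C' = {δ ∈ C : V(δ) ∩ W = ∅}`. -/
def minorsAvoiding {m n : ℕ} (C : Set (Minor2 m n)) (W : Set (Fin m × Fin n)) :
    Set (Minor2 m n) :=
  {δ ∈ C | δ.vertexSet ∩ W = ∅}

/-- The ideal generated by the variables with index in `W`. -/
noncomputable def varIdeal (K : Type*) [Field K] {m n : ℕ} (W : Set (Fin m × Fin n)) :
    Ideal (MvPolynomial (Fin m × Fin n) K) :=
  Ideal.span ((fun p => (X p : MvPolynomial (Fin m × Fin n) K)) '' W)

/-- The prime ideal `P_W(C) = (x_{ij} : x_{ij} ∈ W) + J_{C'}`,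
where `C' = {δ ∈ C : V(δ) ∩ W = ∅}`. -/
noncomputable def PW (K : Type*) [Field K] {m n : ℕ} (C : Set (Minor2 m n))
    (W : Set (Fin m × Fin n)) : Ideal (MvPolynomial (Fin m × Fin n) K) :=
  varIdeal K W + toricIdeal K (minorsAvoiding C W)

/-- A cycle `σ : h_{i₁}, v_{j₁}, h_{i₂}, v_{j₂}, …, h_{i_r}, v_{j_r}` (`r ≥ 2`) of the
bipartite graph `G(C)`, recorded by the intersection vertices
`p k = H_{i_k} ∩ V_{j_k}` and `q k = H_{i_{k+1}} ∩ V_{j_k}` (indices cyclic, `r = len + 2`). -/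
structure CycleIn {m n : ℕ} (C : Set (Minor2 m n)) where
  len : ℕ
  p : Fin (len + 2) → Fin m × Fin n
  q : Fin (len + 2) → Fin m × Fin n
  p_mem : ∀ k, p k ∈ vertexSetOf C
  q_mem : ∀ k, q k ∈ vertexSetOf C
  shareV : ∀ k, vClass C (p k) = vClass C (q k)
  shareH : ∀ k, hClass C (q k) = hClass C (p (k + 1))
  injH : Function.Injective fun k => hClass C (p k)
  injV : Function.Injective fun k => vClass C (p k)

/-- The binomial `f_σ` associated to a cycle `σ` of `G(C)`. -/
noncomputable def cycleBinom (K : Type*) [Field K] {m n : ℕ} {C : Set (Minor2 m n)}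
    (σ : CycleIn C) : MvPolynomial (Fin m × Fin n) K :=
  (∏ k, X (σ.p k)) - (∏ k, X (σ.q k))

/-!
Write the variables as a corner `t = x₀₀`, legs `y_b = x₀b` and `z_a = xₐ₀`, and interior cells
`w_ab`. The corner minors are `t w_ab - y_b z_a`, one for each edge `(a, b)` of a bipartite graph
`G`, and the moves exchange `t w_ab` for `y_b z_a`.

Modulo `t` the ideal `I(C)` becomes the edge ideal of `G`, so the minimal primes containing `t` are
generated by `t` and a vertex cover of legs. A prime over `I(C)` contains `t` as soon as it omits
`y_b w_ad - y_d w_ab` for two edges in a common row, because `t` times this binomial lies in `I(C)`;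
likewise for columns. Hence every cover omitting the leg of an edge that shares its other end
contains some `W ∈ 𝒲`, and both tables have weight at least two on it.

If `G` has a path with three edges, then every cover contains one of this kind, so every cover has
weight at least two. Applied to the legs where a table vanishes (together with at most one more),
this provides enough possible moves to bring `t` to exponent two in both tables, after which the
distance of the interior cells can always be decreased. If `G` is a star forest, exponent one in one
of the tables suffices; if it is zero and no move can increase it, then the covers force that table
to dominate the other one at every interior cell.
-/

section SameFiber

variable {α β : Type*} [Zero α] [Zero β] [Fintype α] [Fintype β]

/-- Two tables have the same row sums, the same column sums, and agree at the interior cells that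
are not edges of `G`: these are the quantities that corner moves along `G` preserve. -/
structure SameFiber (G : α → β → Prop) (U V : α × β → ℕ) : Prop where
  row : ∀ i, ∑ j, U (i, j) = ∑ j, V (i, j)
  col : ∀ j, ∑ i, U (i, j) = ∑ i, V (i, j)
  off : ∀ i j, i ≠ 0 → j ≠ 0 → ¬G i j → U (i, j) = V (i, j)

theorem exists_gt_of_sum_eq {ι : Type*} [Fintype ι] {f g : ι → ℕ} (h : ∑ i, f i = ∑ i, g i)
    {i : ι} (hi : f i < g i) : ∃ j, g j < f j := by
  by_contra! hle
  exact h.not_lt (Finset.sum_lt_sum (fun j _ ↦ hle j) ⟨i, Finset.mem_univ i, hi⟩)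

namespace SameFiber

variable {G : α → β → Prop} {U V W : α × β → ℕ}

theorem symm (h : SameFiber G U V) : SameFiber G V U where
  row i := (h.row i).symm
  col j := (h.col j).symm
  off i j hi hj hij := (h.off i j hi hj hij).symm

theorem trans (h : SameFiber G U V) (h' : SameFiber G V W) : SameFiber G U W where
  row i := (h.row i).trans (h'.row i)
  col j := (h.col j).trans (h'.col j)
  off i j hi hj hij := (h.off i j hi hj hij).trans (h'.off i j hi hj hij)

theorem exists_gt_in_row (h : SameFiber G U V) {i : α} {j : β} (hlt : U (i, j) < V (i, j)) :
    ∃ j', V (i, j') < U (i, j') :=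
  exists_gt_of_sum_eq (h.row i) hlt

theorem exists_gt_in_col (h : SameFiber G U V) {i : α} {j : β} (hlt : U (i, j) < V (i, j)) :
    ∃ i', V (i', j) < U (i', j) :=
  exists_gt_of_sum_eq (h.col j) hlt

theorem adj_of_ne (h : SameFiber G U V) {i : α} {j : β} (hi : i ≠ 0) (hj : j ≠ 0)
    (hne : U (i, j) ≠ V (i, j)) : G i j :=
  not_not.1 fun hG ↦ hne (h.off i j hi hj hG)

theorem eq_of_interior_eq (h : SameFiber G U V)
    (hint : ∀ i j, i ≠ 0 → j ≠ 0 → U (i, j) = V (i, j)) : U = V := by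
  have hrows (i) (j) (hi : i ≠ 0) : U (i, j) = V (i, j) := by
    by_cases hj : j = 0
    · subst hj
      exact (Finset.sum_eq_sum_iff_single (Finset.mem_univ 0) fun j _ hj ↦ hint i j hi hj).1
        (h.row i)
    · exact hint i j hi hj
  ext ⟨i, j⟩
  by_cases hi : i = 0
  · subst hi
    exact (Finset.sum_eq_sum_iff_single (Finset.mem_univ 0) fun i _ hi ↦ hrows i j hi).1
      (h.col j)
  · exact hrows i j hi

end SameFiber

end SameFiber

section CornerMoves

variable {α β : Type*} [Zero α] [Zero β] [DecidableEq α] [DecidableEq β]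

/-- Connectedness of tables by corner moves along `G`: the additive congruence generated by
exchanging one unit on the diagonal `(0, 0)`, `(a, b)` for one unit on the antidiagonal `(0, b)`,
`(a, 0)`, for every edge `(a, b)` of the bipartite graph `G`. -/
def cornerCon (G : α → β → Prop) : AddCon (α × β → ℕ) :=
  addConGen fun U V ↦ ∃ a b, G a b ∧ U = Pi.single (0, 0) 1 + Pi.single (a, b) 1 ∧
    V = Pi.single (0, b) 1 + Pi.single (a, 0) 1

/-- The corner move that puts one unit on the edge `(a, b)`. It is meaningful if `U` is positive at
`(0, b)` and `(a, 0)`; otherwise the subtraction truncates. -/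
def addEdge (U : α × β → ℕ) (a : α) (b : β) : α × β → ℕ :=
  U - (Pi.single (0, b) 1 + Pi.single (a, 0) 1) + (Pi.single (0, 0) 1 + Pi.single (a, b) 1)

/-- The corner move that takes one unit off the edge `(a, b)`. It is meaningful if `U` is positive
at `(0, 0)` and `(a, b)`; otherwise the subtraction truncates. -/
def removeEdge (U : α × β → ℕ) (a : α) (b : β) : α × β → ℕ :=
  U - (Pi.single (0, 0) 1 + Pi.single (a, b) 1) + (Pi.single (0, b) 1 + Pi.single (a, 0) 1)

theorem addEdge_apply (U : α × β → ℕ) (a : α) (b : β) (i : α) (j : β) :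
    addEdge U a b (i, j) =
      U (i, j) - ((if i = 0 ∧ j = b then 1 else 0) + if i = a ∧ j = 0 then 1 else 0) +
        ((if i = 0 ∧ j = 0 then 1 else 0) + if i = a ∧ j = b then 1 else 0) := by
  simp [addEdge, Pi.single_apply]

theorem removeEdge_apply (U : α × β → ℕ) (a : α) (b : β) (i : α) (j : β) :
    removeEdge U a b (i, j) =
      U (i, j) - ((if i = 0 ∧ j = 0 then 1 else 0) + if i = a ∧ j = b then 1 else 0) +
        ((if i = 0 ∧ j = b then 1 else 0) + if i = a ∧ j = 0 then 1 else 0) := by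
  simp [removeEdge, Pi.single_apply]

variable {G : α → β → Prop} {U V W : α × β → ℕ} {a c : α} {b d : β}

theorem addEdge_corner (ha : a ≠ 0) (hb : b ≠ 0) : addEdge U a b (0, 0) = U (0, 0) + 1 := by
  simp [addEdge_apply, ha.symm, hb.symm]

theorem removeEdge_corner (ha : a ≠ 0) (hb : b ≠ 0) :
    removeEdge U a b (0, 0) = U (0, 0) - 1 := by
  simp [removeEdge_apply, ha.symm, hb.symm]

theorem map_eq_of_cornerCon {M : Type*} [AddMonoid M] (f : (α × β → ℕ) →+ M)
    (hf : ∀ a b, G a b → f (Pi.single (0, 0) 1 + Pi.single (a, b) 1) =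
      f (Pi.single (0, b) 1 + Pi.single (a, 0) 1)) (h : cornerCon G U V) : f U = f V := by
  have hle : cornerCon G ≤ AddCon.ker f := AddCon.addConGen_le.2 <| by
    rintro _ _ ⟨a, b, hab, rfl, rfl⟩
    exact hf a b hab
  exact hle h

theorem cornerCon_single (hab : G a b) :
    cornerCon G (Pi.single (0, 0) 1 + Pi.single (a, b) 1)
      (Pi.single (0, b) 1 + Pi.single (a, 0) 1) :=
  AddConGen.Rel.of _ _ ⟨a, b, hab, rfl, rfl⟩

theorem single_add_single_le {ι : Type*} [DecidableEq ι] {U : ι → ℕ} {p q : ι} (hpq : p ≠ q)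
    (hp : 1 ≤ U p) (hq : 1 ≤ U q) : Pi.single p 1 + Pi.single q 1 ≤ U := by
  intro r
  simp only [Pi.add_apply, Pi.single_apply]
  grind

theorem cornerCon_addEdge (hab : G a b) (ha : a ≠ 0) (h0b : 1 ≤ U (0, b)) (ha0 : 1 ≤ U (a, 0)) :
    cornerCon G U (addEdge U a b) := by
  have hle := single_add_single_le (by simp [ha.symm]) h0b ha0
  have hmove := (cornerCon G).add
    ((cornerCon G).refl (U - (Pi.single (0, b) 1 + Pi.single (a, 0) 1)))
    ((cornerCon G).symm (cornerCon_single hab))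
  rwa [tsub_add_cancel_of_le hle] at hmove

theorem cornerCon_removeEdge (hab : G a b) (ha : a ≠ 0) (h00 : 1 ≤ U (0, 0))
    (h_ab : 1 ≤ U (a, b)) : cornerCon G U (removeEdge U a b) := by
  have hle := single_add_single_le (by simp [ha.symm]) h00 h_ab
  have hmove := (cornerCon G).add
    ((cornerCon G).refl (U - (Pi.single (0, 0) 1 + Pi.single (a, b) 1)))
    (cornerCon_single hab)
  rwa [tsub_add_cancel_of_le hle] at hmove

variable [Fintype α] [Fintype β]

theorem SameFiber.of_cornerCon (h : cornerCon G U V) : SameFiber G U V where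
  row i := by
    have := map_eq_of_cornerCon (∑ j, Pi.evalAddMonoidHom (fun _ ↦ ℕ) (i, j)) (fun a b _ ↦ by
      simp [Pi.single_apply, Finset.sum_add_distrib, ite_and]) h
    simpa using this
  col j := by
    have := map_eq_of_cornerCon (∑ i, Pi.evalAddMonoidHom (fun _ ↦ ℕ) (i, j)) (fun a b _ ↦ by
      simp [Pi.single_apply, Finset.sum_add_distrib, and_comm, ite_and, add_comm]) h
    simpa using this
  off i j hi hj hij := map_eq_of_cornerCon (Pi.evalAddMonoidHom (fun _ ↦ ℕ) (i, j))
    (fun a b hab ↦ by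
      have : (i, j) ≠ (a, b) := by grind
      simp [this, hi, hj]) h

/-- The `ℓ¹`-distance of two tables over the interior cells. Together with the row and column sums
the interior determines a table, so this is the measure along which tables are moved together. -/
def interiorDist (U V : α × β → ℕ) : ℕ :=
  ∑ p with p.1 ≠ 0 ∧ p.2 ≠ 0, Nat.dist (U p) (V p)

theorem interiorDist_lt (ha : a ≠ 0) (hb : b ≠ 0)
    (heq : ∀ i j, i ≠ 0 → j ≠ 0 → ¬(i = a ∧ j = b) → U (i, j) = W (i, j))
    (hlt : Nat.dist (U (a, b)) (V (a, b)) < Nat.dist (W (a, b)) (V (a, b))) :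
    interiorDist U V < interiorDist W V := by
  refine Finset.sum_lt_sum ?_ ⟨(a, b), by simp [ha, hb], hlt⟩
  rintro ⟨i, j⟩ hij
  obtain ⟨hi, hj⟩ : i ≠ 0 ∧ j ≠ 0 := by simpa using hij
  by_cases h : i = a ∧ j = b
  · rw [h.1, h.2]
    exact hlt.le
  · rw [heq i j hi hj h]

/-- Corner moves along `G` lead from `U` to a table `U'` that is closer to the target `V`. -/
structure MovesCloser (G : α → β → Prop) (V U U' : α × β → ℕ) : Prop where
  con : cornerCon G U U'
  dist_lt : interiorDist U' V < interiorDist U V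

theorem MovesCloser.trans {U' U'' : α × β → ℕ} (h : MovesCloser G V U U')
    (h' : MovesCloser G V U' U'') : MovesCloser G V U U'' where
  con := (cornerCon G).trans h.con h'.con
  dist_lt := h'.dist_lt.trans h.dist_lt

theorem movesCloser_addEdge (hab : G a b) (ha : a ≠ 0) (hb : b ≠ 0) (h0b : 1 ≤ U (0, b))
    (ha0 : 1 ≤ U (a, 0)) (hlt : U (a, b) < V (a, b)) : MovesCloser G V U (addEdge U a b) where
  con := cornerCon_addEdge hab ha h0b ha0
  dist_lt := interiorDist_lt ha hb (fun i j hi hj hij ↦ by simp [addEdge_apply, hi, hj, hij])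
    (by rw [addEdge_apply]; grind [Nat.dist])

theorem movesCloser_removeEdge (hab : G a b) (ha : a ≠ 0) (hb : b ≠ 0) (h00 : 1 ≤ U (0, 0))
    (hlt : V (a, b) < U (a, b)) : MovesCloser G V U (removeEdge U a b) where
  con := cornerCon_removeEdge hab ha h00 (by omega)
  dist_lt := interiorDist_lt ha hb (fun i j hi hj hij ↦ by simp [removeEdge_apply, hi, hj, hij])
    (by rw [removeEdge_apply]; grind [Nat.dist])

theorem exists_movesCloser_slide (hab : G a b) (ha : a ≠ 0) (hb : b ≠ 0) (hcd : G c d)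
    (hc : c ≠ 0) (hd : d ≠ 0) (h00 : 1 ≤ U (0, 0)) (hlt : U (a, b) < V (a, b))
    (hgt : V (c, d) < U (c, d)) (h0b : b ≠ d → 1 ≤ U (0, b)) (ha0 : a ≠ c → 1 ≤ U (a, 0)) :
    ∃ U', MovesCloser G V U U' ∧ U' (0, 0) = U (0, 0) := by
  have hremove := movesCloser_removeEdge hcd hc hd h00 hgt
  have hadd : MovesCloser G V (removeEdge U c d) (addEdge (removeEdge U c d) a b) :=
    movesCloser_addEdge hab ha hb (by rw [removeEdge_apply]; grind)
      (by rw [removeEdge_apply]; grind) (by rw [removeEdge_apply]; grind)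
  exact ⟨_, hremove.trans hadd, by rw [addEdge_corner ha hb, removeEdge_corner hc hd]; omega⟩

theorem cornerCon_of_descent {P : (α × β → ℕ) → Prop}
    (step : ∀ U, P U → SameFiber G U V →
      cornerCon G U V ∨ ∃ U', MovesCloser G V U U' ∧ P U')
    (hU : P U) (hUV : SameFiber G U V) : cornerCon G U V := by
  induction hk : interiorDist U V using Nat.strong_induction_on generalizing U with
  | _ k ih =>
    obtain hcon | ⟨U', hcloser, hU'⟩ := step U hU hUV
    · exact hcon
    · exact (cornerCon G).trans hcloser.con <| ih _ (hk ▸ hcloser.dist_lt) hU'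
        ((SameFiber.of_cornerCon hcloser.con).symm.trans hUV) rfl

theorem cornerCon_of_interior_le (hUV : SameFiber G U V)
    (hle : ∀ i j, i ≠ 0 → j ≠ 0 → U (i, j) ≤ V (i, j)) : cornerCon G U V := by
  refine cornerCon_of_descent (P := fun U ↦ ∀ i j, i ≠ 0 → j ≠ 0 → U (i, j) ≤ V (i, j))
    (fun U hle hUV ↦ ?_) hle hUV
  by_cases! hex : ∃ a b, a ≠ 0 ∧ b ≠ 0 ∧ U (a, b) < V (a, b)
  · obtain ⟨a, b, ha, hb, hlt⟩ := hex
    obtain ⟨j, hj⟩ := hUV.exists_gt_in_row hlt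
    obtain ⟨i, hi⟩ := hUV.exists_gt_in_col hlt
    obtain rfl : j = 0 := by_contra fun hj0 ↦ (hle a j ha hj0).not_gt hj
    obtain rfl : i = 0 := by_contra fun hi0 ↦ (hle i b hi0 hb).not_gt hi
    refine .inr ⟨_, movesCloser_addEdge (hUV.adj_of_ne ha hb hlt.ne) ha hb (by omega) (by omega)
      hlt, fun i j hi0 hj0 ↦ ?_⟩
    have := hle i j hi0 hj0
    simp only [addEdge_apply]
    grind
  · rw [hUV.eq_of_interior_eq fun i j hi hj ↦ (hle i j hi hj).antisymm (hex i j hi hj)]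
    exact .inl ((cornerCon G).refl V)

theorem cornerCon_of_two_le_corner (hUV : SameFiber G U V) (hU : 1 ≤ U (0, 0))
    (hV : 2 ≤ V (0, 0)) : cornerCon G U V := by
  refine cornerCon_of_descent (P := fun U ↦ 1 ≤ U (0, 0)) (fun U h00 hUV ↦ ?_) hU hUV
  rcases lt_or_ge (U (0, 0)) (V (0, 0)) with hlt | hge
  · obtain ⟨a, ha⟩ := hUV.exists_gt_in_col hlt
    obtain ⟨b, hb⟩ := hUV.symm.exists_gt_in_row ha
    have ha0 : a ≠ 0 := by rintro rfl; omega
    have hb0 : b ≠ 0 := by rintro rfl; omega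
    have hab := hUV.adj_of_ne ha0 hb0 hb.ne
    by_cases h0b : 1 ≤ U (0, b)
    · exact .inr ⟨_, movesCloser_addEdge hab ha0 hb0 h0b (by omega) hb,
        by rw [addEdge_corner ha0 hb0]; omega⟩
    · obtain ⟨c, hc⟩ := hUV.exists_gt_in_col hb
      have hc0 : c ≠ 0 := by rintro rfl; omega
      obtain ⟨U', hcloser, hU'⟩ := exists_movesCloser_slide hab ha0 hb0
        (hUV.adj_of_ne hc0 hb0 hc.ne') hc0 hb0 h00 hb hc (by simp) (by omega)
      exact .inr ⟨U', hcloser, by omega⟩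
  · by_cases! hex : ∃ a b, a ≠ 0 ∧ b ≠ 0 ∧ V (a, b) < U (a, b)
    · obtain ⟨a, b, ha, hb, hgt⟩ := hex
      exact .inr ⟨_, movesCloser_removeEdge (hUV.adj_of_ne ha hb hgt.ne') ha hb h00 hgt,
        by rw [removeEdge_corner ha hb]; omega⟩
    · exact .inl (cornerCon_of_interior_le hUV hex)

/-- Every component of the bipartite graph `G` is a star, that is, `G` has no path with three
edges. -/
def IsStarForest (G : α → β → Prop) : Prop :=
  ∀ ⦃a b c d⦄, G a b → G a d → G c b → b = d ∨ a = c

theorem IsStarForest.cornerCon_of_one_le_corner (hG : IsStarForest G) (hUV : SameFiber G U V)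
    (hU : 1 ≤ U (0, 0)) : cornerCon G U V := by
  refine cornerCon_of_descent (P := fun U ↦ 1 ≤ U (0, 0)) (fun U h00 hUV ↦ ?_) hU hUV
  by_cases! hex : ∃ a b, a ≠ 0 ∧ b ≠ 0 ∧ U (a, b) < V (a, b)
  · obtain ⟨a, b, ha, hb, hlt⟩ := hex
    have hab := hUV.adj_of_ne ha hb hlt.ne
    obtain ⟨j, hj⟩ := hUV.exists_gt_in_row hlt
    obtain ⟨i, hi⟩ := hUV.exists_gt_in_col hlt
    suffices ∃ U', MovesCloser G V U U' ∧ U (0, 0) ≤ U' (0, 0) by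
      obtain ⟨U', hcloser, hle⟩ := this
      exact .inr ⟨U', hcloser, h00.trans hle⟩
    by_cases hj0 : j = 0 <;> by_cases hi0 : i = 0
    · subst hj0 hi0
      exact ⟨_, movesCloser_addEdge hab ha hb (by omega) (by omega) hlt,
        by rw [addEdge_corner ha hb]; omega⟩
    · subst hj0
      obtain ⟨U', hcloser, hU'⟩ := exists_movesCloser_slide hab ha hb
        (hUV.adj_of_ne hi0 hb hi.ne') hi0 hb h00 hlt hi (by simp) (by omega)
      exact ⟨U', hcloser, hU'.ge⟩
    · subst hi0
      obtain ⟨U', hcloser, hU'⟩ := exists_movesCloser_slide hab ha hb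
        (hUV.adj_of_ne ha hj0 hj.ne') ha hj0 h00 hlt hj (by omega) (by simp)
      exact ⟨U', hcloser, hU'.ge⟩
    · obtain rfl | rfl := hG hab (hUV.adj_of_ne ha hj0 hj.ne') (hUV.adj_of_ne hi0 hb hi.ne')
      · omega
      · omega
  · exact .inl ((cornerCon G).symm (cornerCon_of_interior_le hUV.symm hex))

end CornerMoves

section Covers

/-- The total content of a table over a set of cells. -/
noncomputable def weight {ι : Type*} [Finite ι] (U : ι → ℕ) (Z : Set ι) : ℕ :=
  ∑ p ∈ (Set.toFinite Z).toFinset, U p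

theorem weight_le_sum {ι : Type*} [Finite ι] {U : ι → ℕ} {Z : Set ι} {s : Finset ι}
    (h : ∀ p ∈ Z, U p ≠ 0 → p ∈ s) : weight U Z ≤ ∑ p ∈ s, U p :=
  Finset.sum_le_sum_of_ne_zero fun p hp ↦ h p ((Set.Finite.mem_toFinset _).1 hp)

theorem weight_mono {ι : Type*} [Finite ι] (U : ι → ℕ) {W Z : Set ι} (h : W ⊆ Z) :
    weight U W ≤ weight U Z :=
  weight_le_sum fun _ hp _ ↦ (Set.Finite.mem_toFinset _).2 (h hp)

variable {α β : Type*} [Zero α] [Zero β]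

/-- `Z` contains the corner and meets every corner move along `G` in one of its two legs `(a, 0)`,
`(0, b)`: besides the corner, the legs in `Z` form a vertex cover of `G`. -/
structure IsCover (G : α → β → Prop) (Z : Set (α × β)) : Prop where
  corner : (0, 0) ∈ Z
  leg : ∀ a b, G a b → (a, 0) ∈ Z ∨ (0, b) ∈ Z

/-- Some edge of `G` in column `b` shares its row with another edge. -/
def LinkedCol (G : α → β → Prop) (b : β) : Prop :=
  ∃ a d, G a b ∧ G a d ∧ b ≠ d

/-- Some edge of `G` in row `a` shares its column with another edge. -/
def LinkedRow (G : α → β → Prop) (a : α) : Prop :=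
  ∃ b c, G a b ∧ G c b ∧ a ≠ c

/-- `Z` misses the leg of a linked row or column. Such covers contain the variables of a nontoric
minimal prime, whereas the toric prime may lie below the other ones. -/
def OmitsLinked (G : α → β → Prop) (Z : Set (α × β)) : Prop :=
  (∃ b, LinkedCol G b ∧ (0, b) ∉ Z) ∨ ∃ a, LinkedRow G a ∧ (a, 0) ∉ Z

variable {G : α → β → Prop} {U V : α × β → ℕ}

theorem exists_isCover_subset_omitsLinked (hG : ∀ a b, G a b → a ≠ 0 ∧ b ≠ 0)
    (hstar : ¬IsStarForest G) {Z : Set (α × β)} (hZ : IsCover G Z) :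
    ∃ Z' ⊆ Z, IsCover G Z' ∧ OmitsLinked G Z' := by
  by_cases homits : OmitsLinked G Z
  · exact ⟨Z, subset_rfl, hZ, homits⟩
  simp only [IsStarForest, not_forall, not_or] at hstar
  obtain ⟨a, b, c, d, hab, had, hcb, hbd, hac⟩ := hstar
  have hrow_mem (i) (hib : G i b) : (i, 0) ∈ Z := by
    have hlinked : LinkedRow G i := by
      by_cases hia : i = a
      · exact ⟨b, c, hib, hcb, hia ▸ hac⟩
      · exact ⟨b, a, hib, hab, hia⟩
    exact by_contra fun hi ↦ homits (.inr ⟨i, hlinked, hi⟩)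
  refine ⟨Z \ {(0, b)}, Set.sdiff_subset, ⟨⟨hZ.corner, ?_⟩, fun i j hij ↦ ?_⟩,
    .inl ⟨b, ⟨a, d, hab, had, hbd⟩, fun h ↦ h.2 rfl⟩⟩
  · simpa using (hG a b hab).2.symm
  · have hi := (hG i j hij).1
    by_cases hjb : j = b
    · exact .inl ⟨hrow_mem i (hjb ▸ hij), by simp [hi]⟩
    · exact (hZ.leg i j hij).imp (⟨·, by simp [hi]⟩) (⟨·, by simp [hjb]⟩)

/-- The corner move that puts one unit on the edge `(a, b)` of `G` is possible at `U`. -/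
structure IsAddable (G : α → β → Prop) (U : α × β → ℕ) (a : α) (b : β) : Prop where
  adj : G a b
  col_pos : 1 ≤ U (0, b)
  row_pos : 1 ≤ U (a, 0)

theorem IsAddable.cornerCon_addEdge [DecidableEq α] [DecidableEq β] {a : α} {b : β}
    (hG : ∀ a b, G a b → a ≠ 0 ∧ b ≠ 0) (h : IsAddable G U a b) : cornerCon G U (addEdge U a b) :=
  _root_.cornerCon_addEdge h.adj (hG a b h.adj).1 h.col_pos h.row_pos

/-- The corner, the cells where `U` vanishes, and the cells in `s`. If `s` meets every addable edge
this is a cover, and it is a light one. -/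
def zeroCover (U : α × β → ℕ) (s : Finset (α × β)) : Set (α × β) :=
  {p | p = (0, 0) ∨ U p = 0 ∨ p ∈ s}

theorem isCover_zeroCover {s : Finset (α × β)}
    (h : ∀ a b, IsAddable G U a b → (a, 0) ∈ s ∨ (0, b) ∈ s) : IsCover G (zeroCover U s) where
  corner := .inl rfl
  leg a b hab := by
    by_cases ha0 : U (a, 0) = 0
    · exact .inl (.inr (.inl ha0))
    by_cases h0b : U (0, b) = 0
    · exact .inr (.inr (.inl h0b))
    exact (h a b ⟨hab, Nat.one_le_iff_ne_zero.2 h0b, Nat.one_le_iff_ne_zero.2 ha0⟩).imp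
      (.inr <| .inr ·) (.inr <| .inr ·)

theorem exists_compatible_pair {γ δ : Type*} {L : γ → δ → Prop} {A : γ → Prop} {B : δ → Prop}
    (hL : ∃ a b, L a b) (hA : ∀ a, ¬A a → ∃ i j, L i j ∧ i ≠ a)
    (hB : ∀ b, ¬B b → ∃ i j, L i j ∧ j ≠ b) :
    ∃ a b c d, L a b ∧ L c d ∧ (a = c → A a) ∧ (b = d → B b) := by
  obtain ⟨a, b, hab⟩ := hL
  by_cases ha : A a <;> by_cases hb : B b
  · exact ⟨a, b, a, b, hab, hab, fun _ ↦ ha, fun _ ↦ hb⟩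
  · obtain ⟨c, d, hcd, hdb⟩ := hB b hb
    exact ⟨a, b, c, d, hab, hcd, fun _ ↦ ha, fun h ↦ absurd h.symm hdb⟩
  · obtain ⟨c, d, hcd, hca⟩ := hA a ha
    exact ⟨a, b, c, d, hab, hcd, fun h ↦ absurd h.symm hca, fun _ ↦ hb⟩
  · obtain ⟨c, d, hcd, hca⟩ := hA a ha
    obtain ⟨c', d', hcd', hdb'⟩ := hB b hb
    grind

section Finite

variable [Finite α] [Finite β]

theorem weight_zeroCover_le (U : α × β → ℕ) (s : Finset (α × β)) :
    weight U (zeroCover U s) ≤ U (0, 0) + ∑ p ∈ s, U p := by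
  classical
  have hle : weight U (zeroCover U s) ≤ ∑ p ∈ insert (0, 0) s, U p :=
    weight_le_sum fun p hp hUp ↦ Finset.mem_insert.2 (hp.imp_right fun h ↦ h.resolve_left hUp)
  by_cases h0 : (0, 0) ∈ s
  · rw [Finset.insert_eq_of_mem h0] at hle
    exact hle.trans (Nat.le_add_left _ _)
  · rwa [Finset.sum_insert h0] at hle

theorem exists_isAddable_avoiding
    (hU : ∀ Z, IsCover G Z → 2 ≤ weight U Z) {s : Finset (α × β)}
    (hs : U (0, 0) + ∑ p ∈ s, U p ≤ 1) :
    ∃ a b, IsAddable G U a b ∧ (a, 0) ∉ s ∧ (0, b) ∉ s := by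
  by_contra! h
  have hcover : IsCover G (zeroCover U s) :=
    isCover_zeroCover fun a b hab ↦ or_iff_not_imp_left.2 (h a b hab)
  have := (hU _ hcover).trans (weight_zeroCover_le U s)
  omega

theorem exists_isAddable_pair (hU : ∀ Z, IsCover G Z → 2 ≤ weight U Z) (h00 : U (0, 0) = 0) :
    ∃ a b c d, IsAddable G U a b ∧ IsAddable G U c d ∧
      (a = c → 2 ≤ U (a, 0)) ∧ (b = d → 2 ≤ U (0, b)) := by
  refine exists_compatible_pair (A := fun a ↦ 2 ≤ U (a, 0)) (B := fun b ↦ 2 ≤ U (0, b))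
    ?_ (fun a ha ↦ ?_) (fun b hb ↦ ?_)
  · obtain ⟨a, b, hab, -⟩ := exists_isAddable_avoiding hU (s := ∅) (by simp [h00])
    exact ⟨a, b, hab⟩
  · obtain ⟨i, j, hij, hi, -⟩ :=
      exists_isAddable_avoiding hU (s := {(a, 0)}) (by rw [Finset.sum_singleton]; omega)
    exact ⟨i, j, hij, by rintro rfl; simp at hi⟩
  · obtain ⟨i, j, hij, -, hj⟩ :=
      exists_isAddable_avoiding hU (s := {(0, b)}) (by rw [Finset.sum_singleton]; omega)
    exact ⟨i, j, hij, by rintro rfl; simp at hj⟩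

variable [DecidableEq α] [DecidableEq β]

theorem exists_cornerCon_two_le_corner (hG : ∀ a b, G a b → a ≠ 0 ∧ b ≠ 0)
    (hU : ∀ Z, IsCover G Z → 2 ≤ weight U Z) : ∃ U', cornerCon G U U' ∧ 2 ≤ U' (0, 0) := by
  obtain h00 | h00 | h00 : U (0, 0) = 0 ∨ U (0, 0) = 1 ∨ 2 ≤ U (0, 0) := by omega
  · obtain ⟨a, b, c, d, hab, hcd, hac, hbd⟩ := exists_isAddable_pair hU h00
    obtain ⟨ha, hb⟩ := hG a b hab.adj
    obtain ⟨hc, hd⟩ := hG c d hcd.adj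
    have hcd' : IsAddable G (addEdge U a b) c d :=
      ⟨hcd.adj, by have := hcd.col_pos; rw [addEdge_apply]; grind,
        by have := hcd.row_pos; rw [addEdge_apply]; grind⟩
    exact ⟨_, (cornerCon G).trans (hab.cornerCon_addEdge hG) (hcd'.cornerCon_addEdge hG),
      by rw [addEdge_corner hc hd, addEdge_corner ha hb]; omega⟩
  · obtain ⟨a, b, hab, -⟩ := exists_isAddable_avoiding hU (s := ∅) (by simp [h00])
    obtain ⟨ha, hb⟩ := hG a b hab.adj
    exact ⟨_, hab.cornerCon_addEdge hG, by rw [addEdge_corner ha hb]; omega⟩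
  · exact ⟨U, (cornerCon G).refl U, h00⟩

end Finite

section FiberConnectivity

variable [Fintype α] [Fintype β]

theorem IsStarForest.interior_le (hstar : IsStarForest G) (hUV : SameFiber G U V)
    (hadd : ∀ a b, ¬IsAddable G U a b) (hcol : ∀ b, LinkedCol G b → U (0, b) = 0)
    (hrow : ∀ a, LinkedRow G a → U (a, 0) = 0) {a : α} {b : β} (ha : a ≠ 0) (hb : b ≠ 0) :
    V (a, b) ≤ U (a, b) := by
  by_contra! hlt
  have hab := hUV.adj_of_ne ha hb hlt.ne
  obtain ⟨j, hj⟩ := hUV.exists_gt_in_row hlt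
  obtain ⟨i, hi⟩ := hUV.exists_gt_in_col hlt
  have haj (hj0 : j ≠ 0) : G a j := hUV.adj_of_ne ha hj0 hj.ne'
  have hib (hi0 : i ≠ 0) : G i b := hUV.adj_of_ne hi0 hb hi.ne'
  have hbj : b ≠ j := by rintro rfl; omega
  have hai : a ≠ i := by rintro rfl; omega
  by_cases hj0 : j = 0 <;> by_cases hi0 : i = 0
  · subst hj0 hi0
    exact hadd a b ⟨hab, by omega, by omega⟩
  · have := hrow a ⟨b, i, hab, hib hi0, hai⟩
    subst hj0
    omega
  · have := hcol b ⟨a, j, hab, haj hj0, hbj⟩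
    subst hi0
    omega
  · exact (hstar hab (haj hj0) (hib hi0)).elim hbj hai

variable [DecidableEq α] [DecidableEq β]

theorem IsStarForest.cornerCon_of_two_le_weight (hG : ∀ a b, G a b → a ≠ 0 ∧ b ≠ 0)
    (hstar : IsStarForest G) (hUV : SameFiber G U V)
    (hU : ∀ Z, IsCover G Z → OmitsLinked G Z → 2 ≤ weight U Z) : cornerCon G U V := by
  by_cases h00 : 1 ≤ U (0, 0)
  · exact hstar.cornerCon_of_one_le_corner hUV h00
  by_cases! hadd : ∃ a b, IsAddable G U a b
  · obtain ⟨a, b, hab⟩ := hadd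
    obtain ⟨ha, hb⟩ := hG a b hab.adj
    have hcon := hab.cornerCon_addEdge hG
    exact (cornerCon G).trans hcon <| hstar.cornerCon_of_one_le_corner
      ((SameFiber.of_cornerCon hcon).symm.trans hUV) (by rw [addEdge_corner ha hb]; omega)
  have homits : ¬OmitsLinked G (zeroCover U ∅) := fun homits ↦ by
    have := hU _ (isCover_zeroCover fun a b hab ↦ absurd hab (hadd a b)) homits
    have := weight_zeroCover_le U ∅
    simp only [Finset.sum_empty] at this
    omega
  simp only [OmitsLinked, not_or, not_exists, not_and, not_not] at homits
  refine (cornerCon G).symm (cornerCon_of_interior_le hUV.symm fun a b ha hb ↦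
    hstar.interior_le hUV hadd (fun b hb ↦ ?_) (fun a ha ↦ ?_) ha hb)
  · have hb0 : b ≠ 0 := by
      obtain ⟨a, d, hab, -⟩ := hb
      exact (hG a b hab).2
    simpa [zeroCover, hb0] using homits.1 b hb
  · have ha0 : a ≠ 0 := by
      obtain ⟨b, c, hab, -⟩ := ha
      exact (hG a b hab).1
    simpa [zeroCover, ha0] using homits.2 a ha

theorem cornerCon_of_two_le_weight (hG : ∀ a b, G a b → a ≠ 0 ∧ b ≠ 0) (hUV : SameFiber G U V)
    (hU : ∀ Z, IsCover G Z → OmitsLinked G Z → 2 ≤ weight U Z)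
    (hV : ∀ Z, IsCover G Z → OmitsLinked G Z → 2 ≤ weight V Z) : cornerCon G U V := by
  by_cases hstar : IsStarForest G
  · exact hstar.cornerCon_of_two_le_weight hG hUV hU
  have two_le_weight {T : α × β → ℕ}
      (hT : ∀ Z, IsCover G Z → OmitsLinked G Z → 2 ≤ weight T Z) (Z) (hZ : IsCover G Z) :
      2 ≤ weight T Z := by
    obtain ⟨Z', hsub, hZ', homits⟩ := exists_isCover_subset_omitsLinked hG hstar hZ
    exact (hT Z' hZ' homits).trans (weight_mono T hsub)
  obtain ⟨U', hUU', hU'⟩ := exists_cornerCon_two_le_corner hG (two_le_weight hU)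
  obtain ⟨V', hVV', hV'⟩ := exists_cornerCon_two_le_corner hG (two_le_weight hV)
  have hUV' : SameFiber G U' V' :=
    ((SameFiber.of_cornerCon hUU').symm.trans hUV).trans (SameFiber.of_cornerCon hVV')
  exact (cornerCon G).trans hUU' <| (cornerCon G).trans
    (cornerCon_of_two_le_corner hUV' (by omega) hV') ((cornerCon G).symm hVV')

end FiberConnectivity

end Covers

section VariableIdeals

variable {σ R : Type*} [CommRing R]

theorem X_mem_span_X_image {Z : Set σ} {p : σ} (hp : p ∈ Z) :
    (X p : MvPolynomial σ R) ∈ Ideal.span (X '' Z) :=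
  Ideal.subset_span (Set.mem_image_of_mem X hp)

theorem isPrime_span_X_image [IsDomain R] (Z : Set σ) :
    (Ideal.span (X '' Z : Set (MvPolynomial σ R))).IsPrime := by
  classical
  set J : Ideal (MvPolynomial σ R) := Ideal.span (X '' Z)
  let kill : MvPolynomial σ R →ₐ[R] MvPolynomial σ R := aeval fun p ↦ if p ∈ Z then 0 else X p
  have hcomp : (Ideal.Quotient.mkₐ R J).comp kill = Ideal.Quotient.mkₐ R J := by
    ext p
    by_cases hp : p ∈ Z
    · simpa [kill, hp] using (Ideal.Quotient.eq_zero_iff_mem.2 (X_mem_span_X_image hp)).symm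
    · simp [kill, hp]
  have hker : J = RingHom.ker kill := by
    refine le_antisymm (Ideal.span_le.2 ?_) fun f hf ↦ ?_
    · rintro _ ⟨p, hp, rfl⟩
      simp [kill, RingHom.mem_ker, hp]
    · have hf : kill f = 0 := hf
      have hmk := DFunLike.congr_fun hcomp f
      rw [AlgHom.comp_apply, hf, map_zero] at hmk
      exact Ideal.Quotient.eq_zero_iff_mem.1 hmk.symm
  rw [hker]
  exact RingHom.ker_isPrime kill

theorem mem_of_X_mem_span_X_image [Nontrivial R] {Z : Set σ} {p : σ}
    (h : (X p : MvPolynomial σ R) ∈ Ideal.span (X '' Z)) : p ∈ Z := by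
  obtain ⟨q, hq, hpq⟩ := mem_ideal_span_X_image.1 h (Finsupp.single p 1) (by simp)
  rwa [(Finsupp.single_apply_ne_zero.1 hpq).1] at hq

theorem X_mul_X_sub_notMem_span_X_image [Nontrivial R] {Z : Set σ} {p q r s : σ}
    (hp : p ∉ Z) (hq : q ∉ Z) (hrp : r ≠ p) (hrq : r ≠ q) :
    (X p * X q - X r * X s : MvPolynomial σ R) ∉ Ideal.span (X '' Z) := by
  classical
  intro h
  have hle : Ideal.span (X '' Z) ≤
      RingHom.ker (eval fun i ↦ if i = p ∨ i = q then (1 : R) else 0) := by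
    rw [Ideal.span_le]
    rintro _ ⟨i, hi, rfl⟩
    have : ¬(i = p ∨ i = q) := by rintro (rfl | rfl) <;> contradiction
    simp [RingHom.mem_ker, this]
  have := RingHom.mem_ker.1 (hle h)
  simp [hrp, hrq] at this

/-- The homomorphism sending a table of exponents to its monomial. -/
noncomputable def monomialOf (σ R : Type*) [Fintype σ] [CommRing R] :
    (σ → ℕ) →+ Additive (MvPolynomial σ R) where
  toFun U := .ofMul (∏ p, X p ^ U p)
  map_zero' := by simp
  map_add' U V := by simp [pow_add, Finset.prod_mul_distrib]

theorem monomialOf_single_add_single [Fintype σ] [DecidableEq σ] (p q : σ) :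
    monomialOf σ R (Pi.single p 1 + Pi.single q 1) = .ofMul (X p * X q) := by
  have hsingle (i : σ) : monomialOf σ R (Pi.single i 1) = .ofMul (X i) := by
    simp [monomialOf, Pi.single_apply]
  rw [map_add, hsingle, hsingle, ofMul_mul]

end VariableIdeals

section CornerMinors

variable (K : Type*) [Field K] {m n : ℕ}

theorem toricIdeal_empty : toricIdeal K (∅ : Set (Minor2 m n)) = ⊥ := by
  let position : Quot (horizAdj (∅ : Set (Minor2 m n))) → Fin m × Fin n :=
    Quot.lift id fun _ _ ⟨_, hδ, _⟩ ↦ hδ.elim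
  let ψ : MvPolynomial (Quot (horizAdj (∅ : Set (Minor2 m n))) ⊕
      Quot (vertAdj (∅ : Set (Minor2 m n)))) K →ₐ[K] MvPolynomial (Fin m × Fin n) K :=
    aeval (Sum.elim (fun c ↦ X (position c)) fun _ ↦ 1)
  have hψ : ψ.comp (phiC K ∅) = AlgHom.id K _ := by
    ext1 p
    simp [ψ, phiC, hClass, position]
  exact (RingHom.injective_iff_ker_eq_bot _).1
    (Function.LeftInverse.injective (g := ψ) (DFunLike.congr_fun hψ))

variable [NeZero m] [NeZero n]

/-- The bipartite graph of a set of corner minors: an edge `(a, b)` stands for the corner minor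
with opposite corner `(a, b)`. -/
def CornerAdj (C : Set (Minor2 m n)) (a : Fin m) (b : Fin n) : Prop :=
  ∃ δ ∈ C, δ.a2 = a ∧ δ.b2 = b

variable {K} {C : Set (Minor2 m n)} {a : Fin m} {b : Fin n} {W Z : Set (Fin m × Fin n)}
  {Q : Ideal (MvPolynomial (Fin m × Fin n) K)}

theorem CornerAdj.ne_zero (hC : ∀ δ ∈ C, δ.a1 = 0 ∧ δ.b1 = 0) (h : CornerAdj C a b) :
    a ≠ 0 ∧ b ≠ 0 := by
  obtain ⟨δ, hδ, rfl, rfl⟩ := h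
  obtain ⟨ha, hb⟩ := hC δ hδ
  exact ⟨(ha ▸ δ.ha).ne', (hb ▸ δ.hb).ne'⟩

theorem vertexSet_of_corner {δ : Minor2 m n} (hδ : δ.a1 = 0 ∧ δ.b1 = 0) :
    δ.vertexSet = {(0, 0), (0, δ.b2), (δ.a2, 0), (δ.a2, δ.b2)} := by
  rw [Minor2.vertexSet, hδ.1, hδ.2]

theorem CornerAdj.subset_vertexSetOf (hC : ∀ δ ∈ C, δ.a1 = 0 ∧ δ.b1 = 0)
    (h : CornerAdj C a b) : {(0, 0), (0, b), (a, 0), (a, b)} ⊆ vertexSetOf C := by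
  obtain ⟨δ, hδ, rfl, rfl⟩ := h
  rw [← vertexSet_of_corner (hC δ hδ)]
  exact Set.subset_biUnion_of_mem (u := Minor2.vertexSet) hδ

theorem cornerAdj_of_mem_vertexSetOf (hC : ∀ δ ∈ C, δ.a1 = 0 ∧ δ.b1 = 0)
    (h : (a, b) ∈ vertexSetOf C) (ha : a ≠ 0) (hb : b ≠ 0) : CornerAdj C a b := by
  obtain ⟨δ, hδ, hmem⟩ := Set.mem_iUnion₂.1 h
  rw [vertexSet_of_corner (hC δ hδ)] at hmem
  have : a = δ.a2 ∧ b = δ.b2 := by simpa [ha, hb] using hmem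
  exact ⟨δ, hδ, this.1.symm, this.2.symm⟩

theorem CornerAdj.binom_mem_minorIdeal (hC : ∀ δ ∈ C, δ.a1 = 0 ∧ δ.b1 = 0)
    (h : CornerAdj C a b) :
    (X (0, 0) * X (a, b) - X (0, b) * X (a, 0) : MvPolynomial (Fin m × Fin n) K)
      ∈ minorIdeal K C := by
  obtain ⟨δ, hδ, rfl, rfl⟩ := h
  exact Ideal.subset_span ⟨δ, hδ, by rw [Minor2.binom, (hC δ hδ).1, (hC δ hδ).2]⟩

theorem prod_X_pow_sub_mem_minorIdeal (hC : ∀ δ ∈ C, δ.a1 = 0 ∧ δ.b1 = 0)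
    {U V : Fin m × Fin n → ℕ} (h : cornerCon (CornerAdj C) U V) :
    (∏ p, X p ^ U p - ∏ p, X p ^ V p : MvPolynomial (Fin m × Fin n) K) ∈ minorIdeal K C := by
  let mk := Ideal.Quotient.mk (minorIdeal K C)
  have hmk := map_eq_of_cornerCon
    (mk.toMonoidHom.toAdditive.comp (monomialOf (Fin m × Fin n) K)) (fun a b hab ↦ by
      have : mk (X (0, 0) * X (a, b)) = mk (X (0, b) * X (a, 0)) :=
        Ideal.Quotient.eq.2 (hab.binom_mem_minorIdeal hC)
      rw [AddMonoidHom.comp_apply, AddMonoidHom.comp_apply, monomialOf_single_add_single,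
        monomialOf_single_add_single]
      exact congrArg Additive.ofMul this) h
  exact Ideal.Quotient.eq.1 hmk

theorem minorIdeal_le_varIdeal (hC : ∀ δ ∈ C, δ.a1 = 0 ∧ δ.b1 = 0)
    (hZ : IsCover (CornerAdj C) Z) : minorIdeal K C ≤ varIdeal K Z := by
  refine Ideal.span_le.2 ?_
  rintro _ ⟨δ, hδ, rfl⟩
  rw [SetLike.mem_coe, Minor2.binom, (hC δ hδ).1, (hC δ hδ).2]
  refine Ideal.sub_mem _ (Ideal.mul_mem_right _ _ (X_mem_span_X_image hZ.corner)) ?_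
  obtain hrow | hcol := hZ.leg _ _ ⟨δ, hδ, rfl, rfl⟩
  · exact Ideal.mul_mem_left _ _ (X_mem_span_X_image hrow)
  · exact Ideal.mul_mem_right _ _ (X_mem_span_X_image hcol)

theorem IsCover.admissible (hC : ∀ δ ∈ C, δ.a1 = 0 ∧ δ.b1 = 0) (hW : IsCover (CornerAdj C) W)
    (hsub : W ⊆ vertexSetOf C) : Admissible C W := by
  refine ⟨hsub, fun δ hδ ↦ .inr ?_⟩
  obtain ⟨ha, hb⟩ := hC δ hδ
  obtain hrow | hcol := hW.leg _ _ ⟨δ, hδ, rfl, rfl⟩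
  · exact ⟨_, _, hW.corner, hrow, .inl (.inl (by rw [ha, hb]))⟩
  · exact ⟨_, _, hW.corner, hcol, .inr (.inl (by rw [ha, hb]))⟩

theorem PW_eq_varIdeal (hC : ∀ δ ∈ C, δ.a1 = 0 ∧ δ.b1 = 0) (h00 : (0, 0) ∈ W) :
    PW K C W = varIdeal K W := by
  have hnone : minorsAvoiding C W = ∅ := by
    refine Set.eq_empty_of_forall_notMem fun δ ⟨hδ, hdisj⟩ ↦ ?_
    have hmem : (0, 0) ∈ δ.vertexSet := by simp [vertexSet_of_corner (hC δ hδ)]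
    exact Set.eq_empty_iff_forall_notMem.1 hdisj _ ⟨hmem, h00⟩
  rw [PW, hnone, toricIdeal_empty, Submodule.add_eq_sup, sup_bot_eq]

/-- The variables of `C` contained in an ideal `Q`; for a nontoric minimal prime `Q` of `I(C)` this
is the set `W` with `Q = P_W(C)`. -/
def variablesIn (C : Set (Minor2 m n)) (Q : Ideal (MvPolynomial (Fin m × Fin n) K)) :
    Set (Fin m × Fin n) :=
  {p ∈ vertexSetOf C | X p ∈ Q}

theorem isCover_variablesIn (hC : ∀ δ ∈ C, δ.a1 = 0 ∧ δ.b1 = 0) [hQ : Q.IsPrime]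
    (hIQ : minorIdeal K C ≤ Q) (h00C : (0, 0) ∈ vertexSetOf C) (h00 : X (0, 0) ∈ Q) :
    IsCover (CornerAdj C) (variablesIn C Q) where
  corner := ⟨h00C, h00⟩
  leg a b hab := by
    have hmul : X (0, b) * X (a, 0) ∈ Q := ((Submodule.sub_mem_iff_right Q
      (Ideal.mul_mem_right _ _ h00)).1 (hIQ (hab.binom_mem_minorIdeal hC)))
    have hsub := hab.subset_vertexSetOf hC
    exact (hQ.mem_or_mem hmul).symm.imp (⟨hsub (by simp), ·⟩) (⟨hsub (by simp), ·⟩)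

theorem PW_variablesIn_eq (hC : ∀ δ ∈ C, δ.a1 = 0 ∧ δ.b1 = 0)
    (hQ : Q ∈ (minorIdeal K C).minimalPrimes) (h00C : (0, 0) ∈ vertexSetOf C)
    (h00 : X (0, 0) ∈ Q) : PW K C (variablesIn C Q) = Q := by
  have := hQ.1.1
  have hcover := isCover_variablesIn hC hQ.1.2 h00C h00
  have hle : varIdeal K (variablesIn C Q) ≤ Q := by
    refine Ideal.span_le.2 ?_
    rintro _ ⟨p, hp, rfl⟩
    exact hp.2
  rw [PW_eq_varIdeal hC hcover.corner]
  exact hle.antisymm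
    (hQ.2 ⟨isPrime_span_X_image _, minorIdeal_le_varIdeal hC hcover⟩ hle)

theorem exists_corner_mul_mem_minorIdeal (hC : ∀ δ ∈ C, δ.a1 = 0 ∧ δ.b1 = 0)
    (hlegs : ∀ a b, CornerAdj C a b → (a, b) ∉ Z) (homits : OmitsLinked (CornerAdj C) Z) :
    ∃ g : MvPolynomial (Fin m × Fin n) K, X (0, 0) * g ∈ minorIdeal K C ∧ g ∉ varIdeal K Z := by
  obtain ⟨b, ⟨a, d, hab, had, hbd⟩, hb⟩ | ⟨a, ⟨b, c, hab, hcb, hac⟩, ha⟩ := homits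
  · refine ⟨X (0, b) * X (a, d) - X (0, d) * X (a, b), ?_, X_mul_X_sub_notMem_span_X_image hb
      (hlegs a d had) (by simp [hbd.symm]) (by simp [(hab.ne_zero hC).1.symm])⟩
    have hmem := Ideal.sub_mem (minorIdeal K C)
      (Ideal.mul_mem_left _ (X (0, b)) (had.binom_mem_minorIdeal hC))
      (Ideal.mul_mem_left _ (X (0, d)) (hab.binom_mem_minorIdeal hC))
    convert hmem using 1
    ring
  · refine ⟨X (a, 0) * X (c, b) - X (c, 0) * X (a, b), ?_, X_mul_X_sub_notMem_span_X_image ha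
      (hlegs c b hcb) (by simp [hac.symm]) (by simp [(hab.ne_zero hC).2.symm])⟩
    have hmem := Ideal.sub_mem (minorIdeal K C)
      (Ideal.mul_mem_left _ (X (a, 0)) (hcb.binom_mem_minorIdeal hC))
      (Ideal.mul_mem_left _ (X (c, 0)) (hab.binom_mem_minorIdeal hC))
    convert hmem using 1
    ring

variable (K) in
theorem exists_minimalPrime_PW_subset (hC : ∀ δ ∈ C, δ.a1 = 0 ∧ δ.b1 = 0)
    (hZ : IsCover (CornerAdj C) Z) (homits : OmitsLinked (CornerAdj C) Z) :
    ∃ W ⊆ Z, Admissible C W ∧ PW K C W ∈ (minorIdeal K C).minimalPrimes ∧ W ≠ ∅ := by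
  let Z' := {p ∈ Z | p.1 = 0 ∨ p.2 = 0}
  have hZ' : IsCover (CornerAdj C) Z' :=
    ⟨⟨hZ.corner, by simp⟩, fun a b hab ↦ (hZ.leg a b hab).imp (⟨·, by simp⟩) (⟨·, by simp⟩)⟩
  have homits' : OmitsLinked (CornerAdj C) Z' :=
    homits.imp (.imp fun _ ↦ .imp_right (mt And.left)) (.imp fun _ ↦ .imp_right (mt And.left))
  obtain ⟨g, hg, hgZ⟩ := exists_corner_mul_mem_minorIdeal (K := K) hC
    (fun a b hab hmem ↦ hmem.2.elim (hab.ne_zero hC).1 (hab.ne_zero hC).2) homits'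
  have h00C : (0, 0) ∈ vertexSetOf C := by
    obtain ⟨_, ⟨_, _, hab, -⟩, -⟩ | ⟨_, ⟨_, _, hab, -⟩, -⟩ := homits <;>
      exact hab.subset_vertexSetOf hC (by simp)
  have : (varIdeal K Z').IsPrime := isPrime_span_X_image Z'
  obtain ⟨Q, hQ, hQZ⟩ := Ideal.exists_minimalPrimes_le (minorIdeal_le_varIdeal (K := K) hC hZ')
  have := hQ.1.1
  have h00 : X (0, 0) ∈ Q :=
    (hQ.1.1.mem_or_mem (hQ.1.2 hg)).resolve_right fun h ↦ hgZ (hQZ h)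
  have hcover := isCover_variablesIn hC hQ.1.2 h00C h00
  refine ⟨variablesIn C Q, fun p hp ↦ (mem_of_X_mem_span_X_image (hQZ hp.2)).1,
    hcover.admissible hC fun p hp ↦ hp.1, ?_, Set.nonempty_iff_ne_empty.1 ⟨_, hcover.corner⟩⟩
  rwa [PW_variablesIn_eq hC hQ h00C h00]

end CornerMinors

theorem statement15_general (K : Type*) [Field K] {m n : ℕ} [NeZero m] [NeZero n]
    {C : Set (Minor2 m n)} (hC : ∀ δ ∈ C, δ.a1 = 0 ∧ δ.b1 = 0) {U V' : Fin m × Fin n → ℕ}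
    (hoff : ∀ p, p ∉ vertexSetOf C → U p = V' p)
    (h1 : ∀ W : Set (Fin m × Fin n), Admissible C W →
      PW K C W ∈ (minorIdeal K C).minimalPrimes → W ≠ ∅ →
        2 ≤ ∑ p ∈ (Set.toFinite W).toFinset, U p ∧
        2 ≤ ∑ p ∈ (Set.toFinite W).toFinset, V' p)
    (hrow : ∀ i : Fin m, ∑ j : Fin n, U (i, j) = ∑ j : Fin n, V' (i, j))
    (hcol : ∀ j : Fin n, ∑ i : Fin m, U (i, j) = ∑ i : Fin m, V' (i, j)) :
    (∏ p : Fin m × Fin n, (X p : MvPolynomial (Fin m × Fin n) K) ^ U p) -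
      (∏ p : Fin m × Fin n, (X p : MvPolynomial (Fin m × Fin n) K) ^ V' p) ∈
      minorIdeal K C := by
  have hfiber : SameFiber (CornerAdj C) U V' := ⟨hrow, hcol, fun a b ha hb hab ↦
    hoff (a, b) fun hmem ↦ hab (cornerAdj_of_mem_vertexSetOf hC hmem ha hb)⟩
  have hweight (Z) (hZ : IsCover (CornerAdj C) Z) (homits : OmitsLinked (CornerAdj C) Z) :
      2 ≤ weight U Z ∧ 2 ≤ weight V' Z := by
    obtain ⟨W, hWZ, hadm, hmin, hne⟩ := exists_minimalPrime_PW_subset K hC hZ homits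
    obtain ⟨hWU, hWV⟩ := h1 W hadm hmin hne
    exact ⟨hWU.trans (weight_mono U hWZ), hWV.trans (weight_mono V' hWZ)⟩
  exact prod_X_pow_sub_mem_minorIdeal hC <| cornerCon_of_two_le_weight
    (fun _ _ ↦ CornerAdj.ne_zero hC) hfiber (fun Z hZ h ↦ (hweight Z hZ h).1)
    fun Z hZ h ↦ (hweight Z hZ h).2

theorem statement15 (K : Type*) [Field K] (m n : ℕ) [NeZero m] [NeZero n]
    (C : Set (Minor2 m n)) (hC : ∀ δ ∈ C, δ.a1 = 0 ∧ δ.b1 = 0)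
    (U V' : Fin m × Fin n → ℕ)
    (hUsupp : ∀ p, p ∉ vertexSetOf C → U p = 0)
    (hVsupp : ∀ p, p ∉ vertexSetOf C → V' p = 0)
    (h1 : ∀ W : Set (Fin m × Fin n), Admissible C W →
      PW K C W ∈ (minorIdeal K C).minimalPrimes → W ≠ ∅ →
        2 ≤ ∑ p ∈ (Set.toFinite W).toFinset, U p ∧
        2 ≤ ∑ p ∈ (Set.toFinite W).toFinset, V' p)
    (hrow : ∀ i : Fin m, ∑ j : Fin n, U (i, j) = ∑ j : Fin n, V' (i, j))
    (hcol : ∀ j : Fin n, ∑ i : Fin m, U (i, j) = ∑ i : Fin m, V' (i, j))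
    (hcyc : ∃ σ : CycleIn C, ∀ p, (U p ≠ 0 ∨ V' p ≠ 0) →
      (∃ k, hClass C p = hClass C (σ.p k)) ∧ (∃ k, vClass C p = vClass C (σ.p k))) :
    (∏ p : Fin m × Fin n, (X p : MvPolynomial (Fin m × Fin n) K) ^ U p) -
      (∏ p : Fin m × Fin n, (X p : MvPolynomial (Fin m × Fin n) K) ^ V' p) ∈
      minorIdeal K C :=
  statement15_general K hC (fun p hp ↦ (hUsupp p hp).trans (hVsupp p hp).symm) h1 hrow hcol
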